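/- arXiv:1402.6973 — 3 statements merged into one kernel-verified Lean document; each statement's English description precedes it below -/
import Mathlib

section
/- In any execution of algorithm ProactiveGreedy on a d-uniform arrival sequence with k ≤ d packets per frame, every frame of the arrival sequence is either successfully delivered (all k of its packets delivered by their deadlines) or has at least one of its packets proactively dropped by the algorithm. -/
/-! ## Model: d-uniform bounded-delay goodput ({\sc d-uBDG}) instances -/

/-- An arrival sequence for the `d`-uniform bounded-delay goodput problem:
`n` frames, each consisting of `k` unit-size packets; packet `(f, ℓ)` (the `ℓ`-th
packet of frame `f`, `0`-indexed) arrives at time `a f ℓ`, arrival times are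
nondecreasing within each frame, and every packet has deadline `a f ℓ + d`. -/
structure ArrivalSeq (n k d : ℕ) where
  a : Fin n → Fin k → ℕ
  mono : ∀ f : Fin n, Monotone (a f)

namespace ArrivalSeq

variable {n k d : ℕ}

/-- At most `b` packets arrive in any single time slot (maximum burst size `b`). -/
def BurstBound (A : ArrivalSeq n k d) (b : ℕ) : Prop :=
  ∀ t : ℕ, Set.ncard {p : Fin n × Fin k | A.a p.1 p.2 = t} ≤ b

/-- A feasible schedule: at most one packet is delivered per time slot, every packet is
delivered at most once, and every delivered packet is delivered between its arrival
time and its deadline. -/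
def IsSchedule (A : ArrivalSeq n k d) (S : ℕ → Option (Fin n × Fin k)) : Prop :=
  (∀ (p : Fin n × Fin k) (t t' : ℕ), S t = some p → S t' = some p → t = t') ∧
  ∀ (p : Fin n × Fin k) (t : ℕ), S t = some p →
    A.a p.1 p.2 ≤ t ∧ t ≤ A.a p.1 p.2 + d

/-- A frame is successful under schedule `S` if all of its packets are delivered. -/
def Successful (A : ArrivalSeq n k d) (S : ℕ → Option (Fin n × Fin k)) (f : Fin n) : Prop :=
  ∀ ℓ : Fin k, ∃ t : ℕ, S t = some (f, ℓ)

/-- The goodput of a schedule: the number of successful frames. -/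
noncomputable def Goodput (A : ArrivalSeq n k d) (S : ℕ → Option (Fin n × Fin k)) : ℕ :=
  Set.ncard {f : Fin n | A.Successful S f}

/-- `S` is an optimal (feasible) schedule for `A`. -/
def IsOptimal (A : ArrivalSeq n k d) (S : ℕ → Option (Fin n × Fin k)) : Prop :=
  A.IsSchedule S ∧
    ∀ S' : ℕ → Option (Fin n × Fin k), A.IsSchedule S' → A.Goodput S' ≤ A.Goodput S

end ArrivalSeq

/-! ## Executions of scheduling algorithms -/

/-- A trace of the execution of a scheduling algorithm on the arrival sequence `A`:
`deliver t` is the packet delivered at the scheduling substep of slot `t` (if any), and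
`dropTime p` is the slot at which packet `p` is dropped by the algorithm (if ever). -/
structure AlgExec {n k d : ℕ} (A : ArrivalSeq n k d) where
  deliver : ℕ → Option (Fin n × Fin k)
  dropTime : Fin n × Fin k → Option ℕ

namespace AlgExec

variable {n k d : ℕ} {A : ArrivalSeq n k d}

/-- packet `p` is delivered at some time `≤ t`. -/
def DeliveredBy (E : AlgExec A) (p : Fin n × Fin k) (t : ℕ) : Prop :=
  ∃ s ≤ t, E.deliver s = some p

/-- packet `p` is delivered at some point of the execution. -/
def Delivered (E : AlgExec A) (p : Fin n × Fin k) : Prop :=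
  ∃ s : ℕ, E.deliver s = some p

/-- packet `p` is dropped at some time `< t`. -/
def DroppedBefore (E : AlgExec A) (p : Fin n × Fin k) (t : ℕ) : Prop :=
  ∃ s < t, E.dropTime p = some s

/-- packet `p` is pending at (the scheduling substep of) slot `t`: it has arrived, its
deadline has not passed, and it has been neither delivered nor dropped before `t`. -/
def Pending (E : AlgExec A) (p : Fin n × Fin k) (t : ℕ) : Prop :=
  A.a p.1 p.2 ≤ t ∧ t ≤ A.a p.1 p.2 + d ∧
    ¬ (∃ s < t, E.deliver s = some p) ∧ ¬ E.DroppedBefore p t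

/-- frame `f` is alive at time `t`: none of its packets has been dropped before `t`,
nor has expired (i.e., reached its deadline undelivered) before `t`. -/
def Alive (E : AlgExec A) (f : Fin n) (t : ℕ) : Prop :=
  ∀ ℓ : Fin k, ¬ E.DroppedBefore (f, ℓ) t ∧
    (A.a f ℓ + d < t → E.DeliveredBy (f, ℓ) (A.a f ℓ + d))

/-- frame `f` has some pending packet at time `t`. -/
def HasPending (E : AlgExec A) (f : Fin n) (t : ℕ) : Prop :=
  ∃ ℓ : Fin k, E.Pending (f, ℓ) t

/-- `I_t(f)`: the index of the first (minimal-index) pending packet of `f` at time `t`. -/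
noncomputable def Iidx (E : AlgExec A) (t : ℕ) (f : Fin n) : ℕ :=
  sInf {ℓ : ℕ | ∃ h : ℓ < k, E.Pending (f, ⟨ℓ, h⟩) t}

/-- frame `f` is completed by the execution: all of its packets are delivered. -/
def Completed (E : AlgExec A) (f : Fin n) : Prop :=
  ∀ ℓ : Fin k, E.Delivered (f, ℓ)

/-- `w f`: the number of packets of frame `f` delivered by the execution. -/
noncomputable def w (E : AlgExec A) (f : Fin n) : ℕ :=
  Set.ncard {ℓ : Fin k | E.Delivered (f, ℓ)}

/-- the first time at which some packet of `f` is dropped. -/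
noncomputable def dropT (E : AlgExec A) (f : Fin n) : ℕ :=
  sInf {t : ℕ | ∃ ℓ : Fin k, E.dropTime (f, ℓ) = some t}

/-- the index of the first packet of `f` to be dropped (the minimal index among the
packets of `f` dropped at the first drop time of `f`). -/
noncomputable def firstDropIdx (E : AlgExec A) (f : Fin n) : ℕ :=
  sInf {ℓ : ℕ | ∃ h : ℓ < k, E.dropTime (f, ⟨ℓ, h⟩) = some (E.dropT f)}

/-! ### The algorithm `ProactiveGreedy` -/

/-- The defining conditions of an execution of `ProactiveGreedy` (with arbitrary
tie-breaking): at every slot `t`,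
(i) a delivered packet is the first pending packet of an alive frame maximizing
`I_t` among all alive frames with pending packets;
(ii) a packet is delivered whenever some alive frame has a pending packet; and
(iii) a packet is dropped at `t` exactly when it is pending at `t` and either its
frame is not alive at `t` (line 1 of the algorithm) or the packet delivered at `t`
belongs to a different frame (line 4: packets of all non-chosen frames are dropped). -/
def PGValid (E : AlgExec A) : Prop :=
  (∀ (t : ℕ) (f : Fin n) (ℓ : Fin k), E.deliver t = some (f, ℓ) →
      E.Alive f t ∧ E.Pending (f, ℓ) t ∧ (ℓ : ℕ) = E.Iidx t f ∧
      ∀ f' : Fin n, E.Alive f' t → E.HasPending f' t → E.Iidx t f' ≤ E.Iidx t f) ∧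
  (∀ t : ℕ, (∃ f : Fin n, E.Alive f t ∧ E.HasPending f t) → E.deliver t ≠ none) ∧
  (∀ (p : Fin n × Fin k) (t : ℕ), E.dropTime p = some t ↔
      E.Pending p t ∧
        (¬ E.Alive p.1 t ∨ ∃ q : Fin n × Fin k, E.deliver t = some q ∧ q.1 ≠ p.1))

/-! ### The mapping `φ` used in the analysis of `ProactiveGreedy` -/

open Classical in
/-- The frame onto which a frame `f ∉ F_PG` is *directly* mapped by the mapping `φ`:
the frame whose packet is delivered at the time `t_f` at which the first packet of `f`
is dropped.  Frames of `F_PG` are mapped to themselves. -/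
noncomputable def phiNext (E : AlgExec A) (f : Fin n) : Fin n :=
  if E.Completed f then f
  else
    match E.deliver (E.dropT f) with
    | some q => q.1
    | none => f

/-- the frame onto which `f` is mapped after `j` successive (re-)mappings of `φ`. -/
noncomputable def phiChain (E : AlgExec A) (f : Fin n) (j : ℕ) : Fin n :=
  (E.phiNext)^[j] f

/-- frame `f` is *directly* mapped by `φ` via the packet `q` (of the frame `q.1`):
`q` is the packet delivered at the time the first packet of `f` is dropped. -/
def PhiDirectVia (E : AlgExec A) (f : Fin n) (q : Fin n × Fin k) : Prop :=
  ¬ E.Completed f ∧ E.deliver (E.dropT f) = some q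

/-- frame `f` is mapped (directly or indirectly, i.e. after re-mappings) by `φ`
via the packet `q`; `M(q)` is the set of frames mapped via `q`. -/
def PhiMappedVia (E : AlgExec A) (f : Fin n) (q : Fin n × Fin k) : Prop :=
  ∃ j : ℕ, E.PhiDirectVia (E.phiChain f j) q

/-! ### The algorithm `Greedy` -/

/-- packet `p` is still pending after the scheduling substep of slot `t`. -/
def PendingAfter (E : AlgExec A) (p : Fin n × Fin k) (t : ℕ) : Prop :=
  E.Pending p t ∧ E.deliver t ≠ some p

/-- frame `f` is infeasible after the scheduling substep of slot `t`: for some pending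
packet `(f, ℓ)` the pending packets of `f` of index `≤ ℓ` cannot all be scheduled in
the slots `t+1, …, a f ℓ + d`. -/
noncomputable def Infeasible (E : AlgExec A) (f : Fin n) (t : ℕ) : Prop :=
  ∃ ℓ : Fin k, E.PendingAfter (f, ℓ) t ∧
    A.a f ℓ + d < t + Set.ncard {j : Fin k | j ≤ ℓ ∧ E.PendingAfter (f, j) t}

/-- The defining conditions of an execution of `Greedy` (with arbitrary tie-breaking):
at every slot `t`,
(i) a delivered packet is the first pending packet of an alive frame maximizing `I_t`
among all alive frames with pending packets;
(ii) a packet is delivered whenever some alive frame has a pending packet; and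
(iii) a packet is dropped at `t` exactly when it is pending at `t`, it is not the
packet delivered at `t`, and either its frame is not alive at `t`, or its residual
slack at `t` is `0` (it expires), or its frame becomes infeasible at `t` (cleanup). -/
noncomputable def GreedyValid (E : AlgExec A) : Prop :=
  (∀ (t : ℕ) (f : Fin n) (ℓ : Fin k), E.deliver t = some (f, ℓ) →
      E.Alive f t ∧ E.Pending (f, ℓ) t ∧ (ℓ : ℕ) = E.Iidx t f ∧
      ∀ f' : Fin n, E.Alive f' t → E.HasPending f' t → E.Iidx t f' ≤ E.Iidx t f) ∧
  (∀ t : ℕ, (∃ f : Fin n, E.Alive f t ∧ E.HasPending f t) → E.deliver t ≠ none) ∧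
  (∀ (p : Fin n × Fin k) (t : ℕ), E.dropTime p = some t ↔
      E.Pending p t ∧ E.deliver t ≠ some p ∧
        (¬ E.Alive p.1 t ∨ A.a p.1 p.2 + d = t ∨ E.Infeasible p.1 t))

/-- packet `p = (f, ℓ)` is *eligible* at time `t`: it is in the buffer (pending) at
`t`, its frame is alive at `t`, and `ℓ = I_t(f)`. -/
def Eligible (E : AlgExec A) (p : Fin n × Fin k) (t : ℕ) : Prop :=
  E.Alive p.1 t ∧ E.Pending p t ∧ (p.2 : ℕ) = E.Iidx t p.1

/-! ### The mapping `ψ` used in the analysis of `Greedy` -/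

/-- The mapping `ψ` used in the analysis of `Greedy`, relative to the set `O` of frames
of a fixed optimal schedule and the maximum burst size `b`.  Every frame of
`F_G` (completed by `Greedy`) is mapped to itself (encoded as `dm f = none`); every
frame `f ∉ F_G` is directly mapped via a packet `q` delivered by `Greedy` no later than
the drop time `t_f` of `f`, whose index is at least the index of the first dropped
packet of `f`; every delivered packet has at most `2` frames of `O` and at most `b`
frames in total directly mapped to it. -/
structure PsiMapping (E : AlgExec A) (O : Set (Fin n)) (b : ℕ) where
  dm : Fin n → Option (Fin n × Fin k)
  mapsSelf : ∀ f : Fin n, E.Completed f → dm f = none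
  mapsAll : ∀ f : Fin n, ¬ E.Completed f → ∃ q : Fin n × Fin k, dm f = some q
  viaValid : ∀ (f : Fin n) (q : Fin n × Fin k), dm f = some q →
    E.firstDropIdx f ≤ (q.2 : ℕ) ∧ ∃ t ≤ E.dropT f, E.deliver t = some q
  capO : ∀ q : Fin n × Fin k, Set.ncard {f : Fin n | f ∈ O ∧ dm f = some q} ≤ 2
  capAll : ∀ q : Fin n × Fin k, Set.ncard {f : Fin n | dm f = some q} ≤ b

namespace PsiMapping

variable {E : AlgExec A} {O : Set (Fin n)} {b : ℕ}

/-- the frame onto which `f` is directly mapped by `ψ` (itself, if `f ∈ F_G`). -/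
def next (M : PsiMapping E O b) (f : Fin n) : Fin n :=
  match M.dm f with
  | some q => q.1
  | none => f

/-- the frame onto which `f` is mapped after `j` successive (re-)mappings of `ψ`. -/
def chain (M : PsiMapping E O b) (f : Fin n) (j : ℕ) : Fin n :=
  (M.next)^[j] f

/-- frame `f` is mapped (directly or indirectly) by `ψ` via the packet `q`;
`M(q)` is the set of frames mapped via `q`. -/
def MappedVia (M : PsiMapping E O b) (f : Fin n) (q : Fin n × Fin k) : Prop :=
  ∃ j : ℕ, M.dm (M.chain f j) = some q

end PsiMapping

end AlgExec

/-!
If no packet of a frame `f` is ever dropped, then `f` is served in every slot in which it has a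
pending packet, for otherwise that packet would be dropped. Other frames therefore never delay the
packets of `f`: these leave in order of index, and the one of index `ℓ` waits only for its `ℓ`
predecessors, all of which have arrived no later than it. So it is delivered within `ℓ` slots of its
arrival, hence before its deadline as soon as `ℓ ≤ d`.
-/

namespace AlgExec

variable {n k d : ℕ} {A : ArrivalSeq n k d} {E : AlgExec A}

/-- A *proactive* execution: every delivered packet is the first pending packet of its frame, and
a pending packet is dropped in any slot in which its frame is not served. This is what remains of
`ProactiveGreedy` when the frame to be served is chosen arbitrarily. -/
structure IsProactive (E : AlgExec A) : Prop where
  isLeast_of_deliver {t : ℕ} {f : Fin n} {ℓ : Fin k} :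
    E.deliver t = some (f, ℓ) → IsLeast {j | E.Pending (f, j) t} ℓ
  served_or_dropped {t : ℕ} {f : Fin n} {ℓ : Fin k} : E.Pending (f, ℓ) t →
    (∃ j, E.deliver t = some (f, j)) ∨ E.dropTime (f, ℓ) = some t

theorem Iidx_le_of_pending {t : ℕ} {f : Fin n} {ℓ : Fin k} (h : E.Pending (f, ℓ) t) :
    E.Iidx t f ≤ ℓ :=
  Nat.sInf_le ⟨ℓ.2, h⟩

theorem PGValid.isProactive (hE : E.PGValid) : E.IsProactive := by
  obtain ⟨deliver_spec, deliver_ne_none, dropTime_iff⟩ := hE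
  constructor
  · intro t f ℓ hdel
    obtain ⟨-, hpend, hidx, -⟩ := deliver_spec t f ℓ hdel
    exact ⟨hpend, fun j hj => Fin.le_def.2 (hidx.trans_le (Iidx_le_of_pending hj))⟩
  · intro t f ℓ hpend
    by_cases halive : E.Alive f t
    · obtain ⟨⟨g, j⟩, hdel⟩ :=
        Option.ne_none_iff_exists'.1 (deliver_ne_none t ⟨f, halive, ℓ, hpend⟩)
      rcases eq_or_ne g f with rfl | hne
      · exact .inl ⟨j, hdel⟩
      · exact .inr ((dropTime_iff _ t).2 ⟨hpend, .inr ⟨(g, j), hdel, hne⟩⟩)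
    · exact .inr ((dropTime_iff _ t).2 ⟨hpend, .inl halive⟩)

namespace IsProactive

theorem deliver_eq_of_isLeast (hE : E.IsProactive) {t : ℕ} {f : Fin n} {ℓ : Fin k}
    (hleast : IsLeast {j | E.Pending (f, j) t} ℓ) (hdrop : E.dropTime (f, ℓ) ≠ some t) :
    E.deliver t = some (f, ℓ) := by
  obtain ⟨j, hdel⟩ := (hE.served_or_dropped hleast.1).resolve_right hdrop
  rwa [(hE.isLeast_of_deliver hdel).unique hleast] at hdel

theorem deliveredBy_arrival_add_index (hE : E.IsProactive) {f : Fin n} (ℓ : Fin k)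
    (hdrop : ∀ j ≤ ℓ, E.dropTime (f, j) = none) (hℓ : (ℓ : ℕ) ≤ d) :
    E.DeliveredBy (f, ℓ) (A.a f ℓ + ℓ) := by
  induction ℓ using WellFoundedLT.induction with
  | ind ℓ ih =>
    by_contra hnot
    have hpend : E.Pending (f, ℓ) (A.a f ℓ + ℓ) := by
      refine ⟨Nat.le_add_right _ _, Nat.add_le_add_left hℓ _, ?_, ?_⟩
      · rintro ⟨s, hs, hdel⟩
        exact hnot ⟨s, hs.le, hdel⟩
      · rintro ⟨s, -, hs⟩
        simp [hdrop ℓ le_rfl] at hs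
    have hfirst : ∀ j, E.Pending (f, j) (A.a f ℓ + ℓ) → ℓ ≤ j := by
      intro j hj
      by_contra! hlt
      obtain ⟨s, hs, hdel⟩ :=
        ih j hlt (fun i hi => hdrop i (hi.trans hlt.le)) ((Fin.le_def.1 hlt.le).trans hℓ)
      have hs_lt : s < A.a f ℓ + ℓ := hs.trans_lt (add_lt_add_of_le_of_lt (A.mono f hlt.le) hlt)
      exact hj.2.2.1 ⟨s, hs_lt, hdel⟩
    have hdel : E.deliver (A.a f ℓ + ℓ) = some (f, ℓ) :=
      hE.deliver_eq_of_isLeast ⟨hpend, hfirst⟩ (by simp [hdrop ℓ le_rfl])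
    exact hnot ⟨_, le_rfl, hdel⟩

end IsProactive

end AlgExec

theorem pg_delivered_or_dropped_general {n k d : ℕ} {A : ArrivalSeq n k d} {E : AlgExec A}
    (hE : E.IsProactive) (f : Fin n) :
    (∀ ℓ : Fin k, (ℓ : ℕ) ≤ d → E.DeliveredBy (f, ℓ) (A.a f ℓ + ℓ)) ∨
      (∃ (ℓ : Fin k) (t : ℕ), E.dropTime (f, ℓ) = some t) := by
  refine or_iff_not_imp_right.2 fun hdrop ℓ => hE.deliveredBy_arrival_add_index ℓ fun j _ => ?_
  exact Option.eq_none_iff_forall_ne_some.2 fun t ht => hdrop ⟨j, t, ht⟩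

/-- In any execution of `ProactiveGreedy` on a `d`-uniform arrival
sequence with `k ≤ d` packets per frame, every frame of the arrival sequence is either
successfully delivered (all `k` of its packets delivered by their deadlines) or has at
least one of its packets proactively dropped by the algorithm. -/
theorem pg_delivered_or_dropped (n k d : ℕ) (hkd : k ≤ d)
    (A : ArrivalSeq n k d) (E : AlgExec A) (hE : E.PGValid) :
    ∀ f : Fin n,
      (∀ ℓ : Fin k, ∃ t ≤ A.a f ℓ + d, E.deliver t = some (f, ℓ)) ∨
      (∃ (ℓ : Fin k) (t : ℕ), E.dropTime (f, ℓ) = some t) := by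
  intro f
  refine (pg_delivered_or_dropped_general hE.isProactive f).imp_left fun hdel ℓ => ?_
  have hℓ : (ℓ : ℕ) ≤ d := ℓ.2.le.trans hkd
  obtain ⟨t, ht, htℓ⟩ := hdel ℓ hℓ
  exact ⟨t, ht.trans (Nat.add_le_add_left hℓ _), htℓ⟩
end

section
/- In any execution of algorithm ProactiveGreedy on an arrival sequence with maximum burst size b, for every frame f and every packet p ∈ f, the number of frames directly mapped by the mapping φ to f via the packet p is at most b. -/
/-! When ProactiveGreedy serves a frame `g` in slot `t`, it drops every pending packet of every
other frame. So the frames with pending packets in slot `t + 1` are `g` and those receiving a packet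
in that slot: at most `b + 1` frames. If `q` is delivered in slot `t + 1`, its own frame is one of
them, and the frames directly mapped via `q` are among the others. -/

namespace AlgExec

variable {n k d b : ℕ} {A : ArrivalSeq n k d} {E : AlgExec A}

theorem Pending.of_le {p : Fin n × Fin k} {s t : ℕ} (h : E.Pending p t) (hst : s ≤ t)
    (ha : A.a p.1 p.2 ≤ s) : E.Pending p s := by
  obtain ⟨-, hexp, hdel, hdrop⟩ := h
  exact ⟨ha, hst.trans hexp, fun ⟨u, hu, hp⟩ => hdel ⟨u, hu.trans_le hst, hp⟩,
    fun ⟨u, hu, hp⟩ => hdrop ⟨u, hu.trans_le hst, hp⟩⟩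

namespace PGValid

theorem alive_of_deliver (hE : E.PGValid) {q : Fin n × Fin k} {t : ℕ}
    (h : E.deliver t = some q) : E.Alive q.1 t :=
  (hE.1 t q.1 q.2 h).1

theorem pending_of_deliver (hE : E.PGValid) {q : Fin n × Fin k} {t : ℕ}
    (h : E.deliver t = some q) : E.Pending q t :=
  (hE.1 t q.1 q.2 h).2.1

theorem dropTime_eq_some_iff (hE : E.PGValid) {p : Fin n × Fin k} {t : ℕ} :
    E.dropTime p = some t ↔ E.Pending p t ∧
      (¬ E.Alive p.1 t ∨ ∃ q : Fin n × Fin k, E.deliver t = some q ∧ q.1 ≠ p.1) :=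
  hE.2.2 p t

theorem deliver_inj (hE : E.PGValid) {q : Fin n × Fin k} {s t : ℕ}
    (hs : E.deliver s = some q) (ht : E.deliver t = some q) : s = t := by
  obtain ⟨-, -, hs', -⟩ := hE.pending_of_deliver hs
  obtain ⟨-, -, ht', -⟩ := hE.pending_of_deliver ht
  exact le_antisymm (not_lt.1 fun h => hs' ⟨t, h, ht⟩) (not_lt.1 fun h => ht' ⟨s, h, hs⟩)

theorem exists_deliver_of_dropTime_ne (hE : E.PGValid) {p : Fin n × Fin k} {t : ℕ}
    (hp : E.Pending p t) (hdrop : E.dropTime p ≠ some t) :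
    ∃ ℓ, E.deliver t = some (p.1, ℓ) := by
  have hkeep : ¬ (¬ E.Alive p.1 t ∨ ∃ q : Fin n × Fin k, E.deliver t = some q ∧ q.1 ≠ p.1) :=
    fun h => hdrop (hE.dropTime_eq_some_iff.2 ⟨hp, h⟩)
  push Not at hkeep
  obtain ⟨halive, hsame⟩ := hkeep
  obtain ⟨q, hq⟩ := Option.ne_none_iff_exists'.1 (hE.2.1 t ⟨p.1, halive, p.2, hp⟩)
  exact ⟨q.2, by rw [hq, ← hsame q hq]⟩

-- An undelivered packet that is never dropped stays pending for `d + 1` slots, and in each of them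
-- another packet of its frame is delivered, so that the frame has at least `d + 2` packets.
theorem completed_of_dropTime_eq_none (hE : E.PGValid) (hk : k ≤ d + 1) {f : Fin n}
    (hf : ∀ ℓ, E.dropTime (f, ℓ) = none) : E.Completed f := by
  intro ℓ
  by_contra hℓ
  have hpending (s : Fin (d + 1)) : E.Pending (f, ℓ) (A.a f ℓ + s) :=
    ⟨Nat.le_add_right _ _, Nat.add_le_add_left s.is_le _, fun ⟨u, _, hu⟩ => hℓ ⟨u, hu⟩,
      fun ⟨u, _, hu⟩ => by simp [hf] at hu⟩
  have hserved (s : Fin (d + 1)) : ∃ m, E.deliver (A.a f ℓ + s) = some (f, m) :=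
    hE.exists_deliver_of_dropTime_ne (hpending s) (by simp [hf])
  choose m hm using hserved
  have hinj : Function.Injective m := fun s s' h =>
    Fin.ext (Nat.add_left_cancel (hE.deliver_inj (hm s) (h ▸ hm s')))
  have hmiss : ℓ ∉ Set.range m := by
    rintro ⟨s, rfl⟩
    exact hℓ ⟨_, hm s⟩
  have hcard := Fintype.card_lt_of_injective_of_notMem m hinj hmiss
  simp only [Fintype.card_fin] at hcard
  omega

theorem exists_dropTime_eq_dropT (hE : E.PGValid) (hk : k ≤ d + 1) {f : Fin n}
    (hf : ¬ E.Completed f) : ∃ ℓ, E.dropTime (f, ℓ) = some (E.dropT f) := by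
  have hne : {t : ℕ | ∃ ℓ, E.dropTime (f, ℓ) = some t}.Nonempty := by
    by_contra! hempty
    refine hf (hE.completed_of_dropTime_eq_none hk fun ℓ => Option.eq_none_iff_forall_ne_some.2 ?_)
    exact fun t ht => Set.eq_empty_iff_forall_notMem.1 hempty t ⟨ℓ, ht⟩
  exact Nat.sInf_mem hne

theorem hasPending_dropT (hE : E.PGValid) (hk : k ≤ d + 1) {f : Fin n}
    (hf : ¬ E.Completed f) : E.HasPending f (E.dropT f) := by
  obtain ⟨ℓ, hℓ⟩ := hE.exists_dropTime_eq_dropT hk hf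
  exact ⟨ℓ, (hE.dropTime_eq_some_iff.1 hℓ).1⟩

theorem ne_of_phiDirectVia (hE : E.PGValid) (hk : k ≤ d + 1) {f : Fin n} {q : Fin n × Fin k}
    (h : E.PhiDirectVia f q) : f ≠ q.1 := by
  obtain ⟨hf, hq⟩ := h
  obtain ⟨ℓ, hℓ⟩ := hE.exists_dropTime_eq_dropT hk hf
  rintro rfl
  obtain ⟨-, hdead | ⟨q', hq', hne⟩⟩ := hE.dropTime_eq_some_iff.1 hℓ
  · have halive := hE.alive_of_deliver hq
    exact hdead halive
  · rw [hq, Option.some_inj] at hq'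
    subst hq'
    exact hne rfl

theorem exists_deliver_of_pending_succ (hE : E.PGValid) {p : Fin n × Fin k} {t : ℕ}
    (hp : E.Pending p (t + 1)) (ha : A.a p.1 p.2 ≤ t) :
    ∃ ℓ, E.deliver t = some (p.1, ℓ) :=
  hE.exists_deliver_of_dropTime_ne (hp.of_le t.le_succ ha)
    fun hdrop => hp.2.2.2 ⟨t, t.lt_succ_self, hdrop⟩

theorem subsingleton_hasPending_sdiff_arrivals (hE : E.PGValid) (t : ℕ) :
    ({f | E.HasPending f t} \ Prod.fst '' {p : Fin n × Fin k | A.a p.1 p.2 = t}).Subsingleton := by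
  rintro f ⟨⟨ℓ, hℓ⟩, hf⟩ g ⟨⟨m, hm⟩, hg⟩
  have haf : A.a f ℓ < t := hℓ.1.lt_of_ne fun h => hf ⟨(f, ℓ), h, rfl⟩
  have hag : A.a g m < t := hm.1.lt_of_ne fun h => hg ⟨(g, m), h, rfl⟩
  obtain ⟨t, rfl⟩ := Nat.exists_eq_succ_of_ne_zero (Nat.ne_zero_of_lt haf)
  obtain ⟨ℓ', hf'⟩ := hE.exists_deliver_of_pending_succ hℓ (Nat.le_of_lt_succ haf)
  obtain ⟨m', hg'⟩ := hE.exists_deliver_of_pending_succ hm (Nat.le_of_lt_succ hag)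
  exact congrArg Prod.fst (Option.some_inj.1 (hf'.symm.trans hg'))

theorem ncard_hasPending_le (hE : E.PGValid) (hburst : A.BurstBound b) (t : ℕ) :
    {f | E.HasPending f t}.ncard ≤ b + 1 := by
  set arrivals := {p : Fin n × Fin k | A.a p.1 p.2 = t}
  calc {f | E.HasPending f t}.ncard
      ≤ ({f | E.HasPending f t} \ Prod.fst '' arrivals).ncard + (Prod.fst '' arrivals).ncard :=
        Set.ncard_le_ncard_sdiff_add_ncard _ _
    _ ≤ 1 + b := add_le_add
        (Set.ncard_le_one_iff_subsingleton.2 (hE.subsingleton_hasPending_sdiff_arrivals t))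
        ((Set.ncard_image_le (Set.toFinite _)).trans (hburst t))
    _ = b + 1 := add_comm 1 b

end PGValid

end AlgExec

theorem pg_direct_mapping_load_general {n k d b : ℕ} (hk : k ≤ d + 1) {A : ArrivalSeq n k d}
    (hburst : A.BurstBound b) {E : AlgExec A} (hE : E.PGValid) (q : Fin n × Fin k) :
    {f : Fin n | E.PhiDirectVia f q}.ncard ≤ b := by
  obtain hempty | ⟨f₀, -, hq⟩ := {f : Fin n | E.PhiDirectVia f q}.eq_empty_or_nonempty
  · simp [hempty]
  set t := E.dropT f₀
  have hsub : insert q.1 {f | E.PhiDirectVia f q} ⊆ {f | E.HasPending f t} := by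
    rintro f (rfl | ⟨hf, hfq⟩)
    · exact ⟨q.2, hE.pending_of_deliver hq⟩
    · exact hE.deliver_inj hfq hq ▸ hE.hasPending_dropT hk hf
  have hq_notMem : q.1 ∉ {f | E.PhiDirectVia f q} := fun h => hE.ne_of_phiDirectVia hk h rfl
  have hcard := (Set.ncard_le_ncard hsub).trans (hE.ncard_hasPending_le hburst t)
  rw [Set.ncard_insert_of_notMem hq_notMem] at hcard
  exact Nat.le_of_succ_le_succ hcard

/-- In any execution of `ProactiveGreedy` on an arrival sequence with
maximum burst size `b`, for every frame and every packet `q` of it, the number of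
frames directly mapped by `φ` to that frame via the packet `q` is at most `b`. -/
theorem pg_direct_mapping_load (n k d b : ℕ) (hkd : k ≤ d)
    (A : ArrivalSeq n k d) (hburst : A.BurstBound b)
    (E : AlgExec A) (hE : E.PGValid) :
    ∀ q : Fin n × Fin k, Set.ncard {f : Fin n | E.PhiDirectVia f q} ≤ b :=
  pg_direct_mapping_load_general (Nat.le_succ_of_le hkd) hburst hE
end

section
/- In any execution of algorithm Greedy on a d-uniform arrival sequence with maximum burst size b, for every time t and every index ℓ, if n is the total number of packets with index at least ℓ that became eligible and were subsequently dropped by Greedy by time t, then Greedy delivered at least ⌈n/b⌉ packets with index at least ℓ by time t. -/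
namespace ArrivalSeq

variable {n k d b : ℕ} {A : ArrivalSeq n k d}

theorem BurstBound.ncard_arrivals_le (hb : A.BurstBound b) {T : Set ℕ} (hT : T.Finite) :
    {p : Fin n × Fin k | A.a p.1 p.2 ∈ T}.ncard ≤ b * T.ncard := by
  lift T to Finset ℕ using hT
  calc {p : Fin n × Fin k | A.a p.1 p.2 ∈ T}.ncard
      = (⋃ t ∈ T, {p : Fin n × Fin k | A.a p.1 p.2 = t}).ncard := by
        congr 1; ext p; simp
    _ ≤ ∑ t ∈ T, {p : Fin n × Fin k | A.a p.1 p.2 = t}.ncard := T.set_ncard_biUnion_le _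
    _ ≤ T.card • b := Finset.sum_le_card_nsmul _ _ _ fun t _ => hb t
    _ = b * (T : Set ℕ).ncard := by rw [smul_eq_mul, mul_comm, Set.ncard_coe_finset]

end ArrivalSeq

namespace AlgExec

variable {n k d b : ℕ} {A : ArrivalSeq n k d} {E : AlgExec A}
  {p q : Fin n × Fin k} {f : Fin n} {i : Fin k} {ℓ s t v : ℕ}

theorem Alive.anti (h : E.Alive f t) (hst : s ≤ t) : E.Alive f s := fun i =>
  ⟨fun ⟨r, hr, hdrop⟩ => (h i).1 ⟨r, hr.trans_le hst, hdrop⟩,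
    fun hexp => (h i).2 (hexp.trans_le hst)⟩

theorem Pending.anti (h : E.Pending p t) (hst : s ≤ t) (ha : A.a p.1 p.2 ≤ s) :
    E.Pending p s :=
  ⟨ha, hst.trans h.2.1, fun ⟨r, hr, hdel⟩ => h.2.2.1 ⟨r, hr.trans_le hst, hdel⟩,
    fun ⟨r, hr, hdrop⟩ => h.2.2.2 ⟨r, hr.trans_le hst, hdrop⟩⟩

theorem Alive.exists_deliver_of_pending (hf : E.Alive f t) (hs : E.Pending (f, i) s)
    (hst : s ≤ t) (ht : ¬ E.Pending (f, i) t) :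
    ∃ r, s ≤ r ∧ r < t ∧ E.deliver r = some (f, i) := by
  obtain ⟨r, hrt, hr⟩ : ∃ r < t, E.deliver r = some (f, i) := by
    by_contra hnever
    refine ht ⟨hs.1.trans hst, not_lt.1 fun hexp => ?_, hnever, (hf i).1⟩
    obtain ⟨r, hr, hdel⟩ := (hf i).2 hexp
    exact hnever ⟨r, hr.trans_lt hexp, hdel⟩
  exact ⟨r, not_lt.1 fun hrs => hs.2.2.1 ⟨r, hrs, hr⟩, hrt, hr⟩

theorem Iidx_le (h : E.Pending (f, i) t) : E.Iidx t f ≤ i :=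
  Nat.sInf_le ⟨i.2, h⟩

theorem Alive.exists_eligible_le (hf : E.Alive f t) (h : E.Pending (f, i) t) :
    ∃ j ≤ i, E.Eligible (f, j) t := by
  have hne : {m : ℕ | ∃ hm : m < k, E.Pending (f, ⟨m, hm⟩) t}.Nonempty := ⟨i, i.2, h⟩
  obtain ⟨hlt, hpend⟩ := Nat.sInf_mem hne
  exact ⟨⟨_, hlt⟩, Iidx_le h, hf, hpend, rfl⟩

theorem Eligible.le_of_pending (hp : E.Eligible p t) (h : E.Pending (p.1, i) t) : p.2 ≤ i :=
  Fin.le_def.2 (hp.2.2.trans_le (Iidx_le h))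

theorem Eligible.eq_of_fst_eq (hp : E.Eligible p t) (hq : E.Eligible q t) (h : p.1 = q.1) :
    p = q :=
  Prod.ext h (Fin.ext (by rw [hp.2.2, hq.2.2, h]))

theorem infeasible_of_expire (h : E.PendingAfter (f, i) t) (ht : A.a f i + d = t) :
    E.Infeasible f t := by
  have hpos : 0 < {j : Fin k | j ≤ i ∧ E.PendingAfter (f, j) t}.ncard :=
    (Set.ncard_pos (Set.toFinite _)).2 ⟨i, le_rfl, h⟩
  exact ⟨i, h, by lia⟩

namespace GreedyValid

theorem eligible_of_deliver (hE : E.GreedyValid) (h : E.deliver t = some p) :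
    E.Eligible p t :=
  have hp := hE.1 t p.1 p.2 h
  ⟨hp.1, hp.2.1, hp.2.2.1⟩

theorem exists_deliver_of_eligible (hE : E.GreedyValid) (hp : E.Eligible p t) :
    ∃ q, E.deliver t = some q ∧ p.2 ≤ q.2 := by
  have hpend : E.HasPending p.1 t := ⟨p.2, hp.2.1⟩
  obtain ⟨q, hq⟩ := Option.ne_none_iff_exists'.1 (hE.2.1 t ⟨p.1, hp.1, hpend⟩)
  obtain ⟨-, -, hidx, hmax⟩ := hE.1 t q.1 q.2 hq
  refine ⟨q, hq, Fin.le_def.2 ?_⟩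
  rw [hidx, hp.2.2]
  exact hmax p.1 hp.1 hpend

theorem deliver_inj (hE : E.GreedyValid) (hs : E.deliver s = some p)
    (ht : E.deliver t = some p) : s = t := by
  have not_lt_of_deliver {r u : ℕ} (hr : E.deliver r = some p) (hu : E.deliver u = some p) :
      ¬ r < u := fun hru => (hE.eligible_of_deliver hu).2.1.2.2.1 ⟨r, hru, hr⟩
  exact le_antisymm (not_lt.1 (not_lt_of_deliver ht hs)) (not_lt.1 (not_lt_of_deliver hs ht))

theorem not_deliver_of_dropTime (hE : E.GreedyValid) (h : E.dropTime p = some t) :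
    E.deliver s ≠ some p := by
  intro hs
  obtain ⟨hpend, hne, -⟩ := (hE.2.2 p t).1 h
  rcases lt_trichotomy s t with hst | rfl | hts
  · exact hpend.2.2.1 ⟨s, hst, hs⟩
  · exact hne hs
  · exact (hE.eligible_of_deliver hs).2.1.2.2.2 ⟨t, hts, h⟩

theorem alive_succ (hE : E.GreedyValid) (hf : E.Alive f t) (hfeas : ¬ E.Infeasible f t) :
    E.Alive f (t + 1) := by
  refine fun i => ⟨?_, fun hexp => ?_⟩
  · rintro ⟨r, hr, hdrop⟩
    rcases Nat.lt_succ_iff_lt_or_eq.1 hr with hr | rfl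
    · exact (hf i).1 ⟨r, hr, hdrop⟩
    · obtain ⟨hpend, hne, hdead | hexp | hinf⟩ := (hE.2.2 (f, i) r).1 hdrop
      · exact hdead hf
      · exact hfeas (infeasible_of_expire ⟨hpend, hne⟩ hexp)
      · exact hfeas hinf
  · rcases Nat.lt_succ_iff_lt_or_eq.1 hexp with hexp | rfl
    · exact (hf i).2 hexp
    · by_contra hundel
      have hpend : E.Pending (f, i) (A.a f i + d) :=
        ⟨Nat.le_add_right _ _, le_rfl, fun ⟨r, hr, hdel⟩ => hundel ⟨r, hr.le, hdel⟩, (hf i).1⟩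
      exact hfeas (infeasible_of_expire ⟨hpend, fun hdel => hundel ⟨_, le_rfl, hdel⟩⟩ rfl)

theorem alive_of_pending (hE : E.GreedyValid) (hp : E.Pending p t) (ha : A.a p.1 p.2 < t) :
    E.Alive p.1 t := by
  obtain ⟨r, rfl⟩ : ∃ r, t = r + 1 := Nat.exists_eq_add_one_of_ne_zero (by lia)
  have hpr : E.Pending p r := hp.anti r.le_succ (by lia)
  have hnot : ¬ (¬ E.Alive p.1 r ∨ A.a p.1 p.2 + d = r ∨ E.Infeasible p.1 r) := fun h =>
    hp.2.2.2 ⟨r, r.lt_succ_self,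
      (hE.2.2 p r).2 ⟨hpr, fun hdel => hp.2.2.1 ⟨r, r.lt_succ_self, hdel⟩, h⟩⟩
  push Not at hnot
  exact hE.alive_succ hnot.1 hnot.2.2

theorem eligible_of_le (hE : E.GreedyValid) (hs : E.Eligible p s) (hst : s ≤ t)
    (ht : E.Pending p t) : E.Eligible p t := by
  have halive : E.Alive p.1 t := by
    rcases hst.eq_or_lt with rfl | hlt
    · exact hs.1
    · exact hE.alive_of_pending ht (hs.2.1.1.trans_lt hlt)
  obtain ⟨j, hjp, hj⟩ := halive.exists_eligible_le ht
  have hjs : E.Pending (p.1, j) s := hj.2.1.anti hst ((A.mono p.1 hjp).trans hs.2.1.1)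
  have hpj : p = (p.1, j) := Prod.ext rfl (le_antisymm (hs.le_of_pending hjs) hjp)
  rwa [hpj]

end GreedyValid

/-- The busy slots for threshold `ℓ`: those in which a packet of (`0`-based) index at least `ℓ` is
delivered. Arrivals in these slots are what dropped packets are charged to. -/
def busySlots (E : AlgExec A) (ℓ : ℕ) : Set ℕ :=
  {s | ∃ q : Fin n × Fin k, E.deliver s = some q ∧ ℓ ≤ (q.2 : ℕ)}

/-- The packets of index at least `ℓ` delivered by time `t`. -/
def deliveredPackets (E : AlgExec A) (ℓ t : ℕ) : Set (Fin n × Fin k) :=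
  {p | ℓ ≤ (p.2 : ℕ) ∧ ∃ s ≤ t, E.deliver s = some p}

namespace GreedyValid

theorem mem_busySlots_of_eligible (hE : E.GreedyValid) (hp : E.Eligible p s)
    (hℓ : ℓ ≤ (p.2 : ℕ)) : s ∈ E.busySlots ℓ :=
  have ⟨q, hq, hpq⟩ := hE.exists_deliver_of_eligible hp
  ⟨q, hq, hℓ.trans hpq⟩

theorem ncard_busySlots_le (hE : E.GreedyValid) (ℓ t : ℕ) :
    (E.busySlots ℓ ∩ Set.Iic t).ncard ≤ (E.deliveredPackets ℓ t).ncard := by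
  rw [← Set.ncard_image_of_injective (E.deliveredPackets ℓ t) (Option.some_injective _)]
  refine Set.ncard_le_ncard_of_injOn E.deliver ?_ ?_ (Set.toFinite _)
  · rintro s ⟨⟨q, hq, hℓ⟩, hst⟩
    exact ⟨q, ⟨hℓ, s, hst, hq⟩, hq.symm⟩
  · rintro r ⟨⟨q, hq, -⟩, -⟩ s - hrs
    exact hE.deliver_inj hq (hrs ▸ hq)

theorem exists_deliver_of_busy_since (hE : E.GreedyValid) (hp : E.Eligible p s)
    (hℓ : ℓ ≤ (p.2 : ℕ)) (ha : A.a p.1 p.2 ≤ v) (hvs : v < s) (hv : v ∉ E.busySlots ℓ)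
    (hbusy : Set.Ioo v s ⊆ E.busySlots ℓ) : ∃ j, E.deliver v = some (p.1, j) := by
  obtain ⟨j, -, hj⟩ :=
    (hp.1.anti hvs.le).exists_eligible_le (hp.2.1.anti hvs.le ha)
  have hjℓ : (j : ℕ) < ℓ := not_le.1 fun h => hv (hE.mem_busySlots_of_eligible hj h)
  have hjs : ¬ E.Pending (p.1, j) s := fun h =>
    (hjℓ.trans_le hℓ).not_ge (hp.le_of_pending h)
  obtain ⟨r, hvr, hrs, hr⟩ := hp.1.exists_deliver_of_pending hj.2.1 hvs.le hjs
  have hr_idle : r ∉ E.busySlots ℓ := by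
    rintro ⟨q, hq, hℓq⟩
    obtain rfl : (p.1, j) = q := Option.some.inj (hr.symm.trans hq)
    exact hjℓ.not_ge hℓq
  obtain rfl : v = r := hvr.eq_of_not_lt fun h => hr_idle (hbusy ⟨h, hrs⟩)
  exact ⟨j, hr⟩

theorem eq_of_eligible_of_arrival_notMem (hE : E.GreedyValid)
    (hp : E.Eligible p s) (hℓp : ℓ ≤ (p.2 : ℕ)) (hap : A.a p.1 p.2 ∉ E.busySlots ℓ)
    (hq : E.Eligible q s) (hℓq : ℓ ≤ (q.2 : ℕ)) (haq : A.a q.1 q.2 ∉ E.busySlots ℓ) :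
    p = q := by
  classical
  let v := Nat.findGreatest (· ∉ E.busySlots ℓ) s
  have hv : v ∉ E.busySlots ℓ :=
    Nat.findGreatest_spec (P := (· ∉ E.busySlots ℓ)) hp.2.1.1 hap
  have hvs : v < s := (Nat.findGreatest_le s).lt_of_ne fun h : v = s =>
    hv (h ▸ hE.mem_busySlots_of_eligible hp hℓp)
  have hbusy : Set.Ioo v s ⊆ E.busySlots ℓ := fun r hr =>
    not_not.1 (Nat.findGreatest_is_greatest hr.1 hr.2.le)
  obtain ⟨i, hi⟩ := hE.exists_deliver_of_busy_since hp hℓp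
    (Nat.le_findGreatest hp.2.1.1 hap) hvs hv hbusy
  obtain ⟨j, hj⟩ := hE.exists_deliver_of_busy_since hq hℓq
    (Nat.le_findGreatest hq.2.1.1 haq) hvs hv hbusy
  exact hp.eq_of_fst_eq hq (Prod.mk.inj (Option.some.inj (hi.symm.trans hj))).1

end GreedyValid

/-- The packets of index at least `ℓ` that became eligible and were dropped by time `t`. -/
def eligibleDrops (E : AlgExec A) (ℓ t : ℕ) : Set (Fin n × Fin k) :=
  {p | ℓ ≤ (p.2 : ℕ) ∧ ∃ s' ≤ t, E.dropTime p = some s' ∧ ∃ s ≤ s', E.Eligible p s}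

open Classical in
/-- The packet to which a dropped packet `p` is charged: `p` itself if it arrived in a busy slot,
and otherwise the packet delivered in the slot in which `p` is dropped. The default value `p`
of `Option.getD` is irrelevant for packets that are eligible when dropped. -/
noncomputable def charge (E : AlgExec A) (ℓ : ℕ) (p : Fin n × Fin k) : Fin n × Fin k :=
  if A.a p.1 p.2 ∈ E.busySlots ℓ then p else ((E.dropTime p).bind E.deliver).getD p

theorem charge_of_arrival_mem (h : A.a p.1 p.2 ∈ E.busySlots ℓ) : E.charge ℓ p = p :=
  if_pos h

theorem charge_of_arrival_notMem (h : A.a p.1 p.2 ∉ E.busySlots ℓ)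
    (hdrop : E.dropTime p = some s) (hdel : E.deliver s = some q) : E.charge ℓ p = q := by
  simp [charge, h, hdrop, hdel]

namespace GreedyValid

theorem exists_eligible_of_mem_eligibleDrops (hE : E.GreedyValid)
    (hp : p ∈ E.eligibleDrops ℓ t) : ∃ s ≤ t, E.dropTime p = some s ∧ E.Eligible p s :=
  have ⟨_, s, hst, hdrop, _, hrs, hr⟩ := hp
  ⟨s, hst, hdrop, hE.eligible_of_le hr hrs ((hE.2.2 p s).1 hdrop).1⟩

theorem charge_mapsTo (hE : E.GreedyValid) (ℓ t : ℕ) :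
    Set.MapsTo (E.charge ℓ) (E.eligibleDrops ℓ t)
      {q | A.a q.1 q.2 ∈ E.busySlots ℓ ∩ Set.Iic t} := by
  intro p hp
  obtain ⟨s, hst, hdrop, hel⟩ := hE.exists_eligible_of_mem_eligibleDrops hp
  by_cases hap : A.a p.1 p.2 ∈ E.busySlots ℓ
  · rw [charge_of_arrival_mem hap]
    exact ⟨hap, hel.2.1.1.trans hst⟩
  · obtain ⟨q, hq, hpq⟩ := hE.exists_deliver_of_eligible hel
    have hqel := hE.eligible_of_deliver hq
    rw [charge_of_arrival_notMem hap hdrop hq]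
    refine ⟨by_contra fun haq => ?_, hqel.2.1.1.trans hst⟩
    obtain rfl : p = q :=
      hE.eq_of_eligible_of_arrival_notMem hel hp.1 hap hqel (hp.1.trans hpq) haq
    exact hE.not_deliver_of_dropTime hdrop hq

theorem charge_injOn (hE : E.GreedyValid) (ℓ t : ℕ) :
    Set.InjOn (E.charge ℓ) (E.eligibleDrops ℓ t) := by
  intro p hp p' hp' heq
  obtain ⟨s, -, hdrop, hel⟩ := hE.exists_eligible_of_mem_eligibleDrops hp
  obtain ⟨s', -, hdrop', hel'⟩ := hE.exists_eligible_of_mem_eligibleDrops hp'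
  obtain ⟨q, hq, -⟩ := hE.exists_deliver_of_eligible hel
  obtain ⟨q', hq', -⟩ := hE.exists_deliver_of_eligible hel'
  by_cases hap : A.a p.1 p.2 ∈ E.busySlots ℓ <;> by_cases hap' : A.a p'.1 p'.2 ∈ E.busySlots ℓ
  · rwa [charge_of_arrival_mem hap, charge_of_arrival_mem hap'] at heq
  · rw [charge_of_arrival_mem hap, charge_of_arrival_notMem hap' hdrop' hq'] at heq
    exact absurd (heq ▸ hq') (hE.not_deliver_of_dropTime hdrop)
  · rw [charge_of_arrival_notMem hap hdrop hq, charge_of_arrival_mem hap'] at heq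
    exact absurd (heq ▸ hq) (hE.not_deliver_of_dropTime hdrop')
  · rw [charge_of_arrival_notMem hap hdrop hq, charge_of_arrival_notMem hap' hdrop' hq'] at heq
    obtain rfl : s = s' := hE.deliver_inj hq (heq ▸ hq')
    exact hE.eq_of_eligible_of_arrival_notMem hel hp.1 hap hel' hp'.1 hap'

theorem ncard_eligibleDrops_le (hE : E.GreedyValid) (hb : A.BurstBound b) (ℓ t : ℕ) :
    (E.eligibleDrops ℓ t).ncard ≤ b * (E.deliveredPackets ℓ t).ncard :=
  calc (E.eligibleDrops ℓ t).ncard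
      ≤ {p : Fin n × Fin k | A.a p.1 p.2 ∈ E.busySlots ℓ ∩ Set.Iic t}.ncard :=
        Set.ncard_le_ncard_of_injOn _ (hE.charge_mapsTo ℓ t) (hE.charge_injOn ℓ t)
          (Set.toFinite _)
    _ ≤ b * (E.busySlots ℓ ∩ Set.Iic t).ncard :=
        hb.ncard_arrivals_le ((Set.finite_Iic t).inter_of_right _)
    _ ≤ b * (E.deliveredPackets ℓ t).ncard :=
        Nat.mul_le_mul_left b (hE.ncard_busySlots_le ℓ t)

end GreedyValid

end AlgExec

theorem greedy_eligible_drop_vs_delivered_general {n k d b : ℕ}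
    {A : ArrivalSeq n k d} (hburst : A.BurstBound b) {E : AlgExec A} (hE : E.GreedyValid) :
    ∀ t ℓ : ℕ,
      (Set.ncard {p : Fin n × Fin k | ℓ ≤ (p.2 : ℕ) ∧
          ∃ s' ≤ t, E.dropTime p = some s' ∧ ∃ s ≤ s', E.Eligible p s} + b - 1) / b
        ≤ Set.ncard {p : Fin n × Fin k | ℓ ≤ (p.2 : ℕ) ∧ ∃ s ≤ t, E.deliver s = some p} := by
  intro t ℓ
  rcases b.eq_zero_or_pos with rfl | hb
  · simp
  · exact (ceilDiv_le_iff_le_mul hb).2 (hE.ncard_eligibleDrops_le hburst ℓ t)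

/-- In any execution of `Greedy` on a `d`-uniform arrival sequence
with maximum burst size `b`, for every time `t` and every index `ℓ`: if `m` is the
total number of packets with index at least `ℓ` that became eligible and were
subsequently dropped by `Greedy` by time `t`, then `Greedy` delivered at least
`⌈m / b⌉` packets with index at least `ℓ` by time `t`. -/
theorem greedy_eligible_drop_vs_delivered (n k d b : ℕ) (hkd : k ≤ d)
    (A : ArrivalSeq n k d) (hburst : A.BurstBound b)
    (E : AlgExec A) (hE : E.GreedyValid) :
    ∀ t ℓ : ℕ,
      (Set.ncard {p : Fin n × Fin k | ℓ ≤ (p.2 : ℕ) ∧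
          ∃ s' ≤ t, E.dropTime p = some s' ∧ ∃ s ≤ s', E.Eligible p s} + b - 1) / b
        ≤ Set.ncard {p : Fin n × Fin k | ℓ ≤ (p.2 : ℕ) ∧ ∃ s ≤ t, E.deliver s = some p} :=
  greedy_eligible_drop_vs_delivered_general hburst hE
end
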